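/- arXiv:math-ph/0008007 — 3 statements merged into one kernel-verified Lean document; each statement's English description precedes it below -/
import Mathlib

section
/- Suppose g : ℕ × ℕ × ℕ → ℂ satisfies g(m,n,0) = 1 for all m,n, and the linear map Φ : ℂ[x,p] → End_ℂ(V) defined on the monomial basis by Φ(p^m x^n) = Σ_{s=0}^{min(m,n)} g(m,n,s) · ħ^s · F^{(m−s,n−s)} satisfies, for every polynomial A, both a† ∘ Φ(A) − Φ(A) ∘ a† = iħ · Φ(∂_p A) and (−iħ·a) ∘ Φ(A) − Φ(A) ∘ (−iħ·a) = −iħ · Φ(∂_x A). Then there exists a sequence c : ℕ → ℂ with c 0 = 1 such that g(m,n,s) = (−1)^s · (m!·n!/(s!·(m−s)!·(n−s)!)) · c_s for all m, n and all s ≤ min(m,n). -/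
open Complex MvPolynomial Finset

noncomputable section

/-- The standard basis vector `e n` of `V = ℕ →₀ ℂ`. -/
def e (n : ℕ) : ℕ →₀ ℂ := Finsupp.single n 1

/-- The destruction operator `a`: `a (e 0) = 0`, `a (e (n+1)) = √(n+1) • e n`. -/
def aop : (ℕ →₀ ℂ) →ₗ[ℂ] (ℕ →₀ ℂ) :=
  Finsupp.lsum ℂ fun n => match n with
    | 0 => 0
    | k + 1 => ((Real.sqrt (k + 1) : ℝ) : ℂ) • Finsupp.lsingle k

/-- The creation operator `a†`: `a† (e n) = √(n+1) • e (n+1)`. -/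
def adop : (ℕ →₀ ℂ) →ₗ[ℂ] (ℕ →₀ ℂ) :=
  Finsupp.lsum ℂ fun n => ((Real.sqrt (n + 1) : ℝ) : ℂ) • Finsupp.lsingle (n + 1)

/-- `F^{(m,n)} = (−iℏ·a)^m ∘ (a†)^n` as an element of `End_ℂ(V)`. -/
def F (ℏ : ℝ) (m n : ℕ) : Module.End ℂ (ℕ →₀ ℂ) :=
  ((-(Complex.I * ℏ)) • (aop : Module.End ℂ (ℕ →₀ ℂ))) ^ m * (adop : Module.End ℂ (ℕ →₀ ℂ)) ^ n

/-- The polynomial algebra ℂ[x,p] in two commuting variables. -/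
abbrev Pxp := MvPolynomial (Fin 2) ℂ

/-- The variable `x`. -/
def xv : Pxp := X 0
/-- The variable `p`. -/
def pv : Pxp := X 1

/-- The partial derivative `∂_x` as a linear endomorphism. -/
def Dx : Module.End ℂ Pxp := (pderiv (0 : Fin 2)).toLinearMap
/-- The partial derivative `∂_p` as a linear endomorphism. -/
def Dp : Module.End ℂ Pxp := (pderiv (1 : Fin 2)).toLinearMap

/-!
Rescaled commutators with `a†` and `−iℏa` act on the operators `F^{(m,n)}` exactly as `∂_p` and
`∂_x` act on the monomials `p ^ m x ^ n`, and the hypotheses on `Φ` say that they act in the same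
way on the operators `Φ (p ^ m x ^ n)`. Such Appell families are linearly independent as soon as
their `(0, 0)` member is nonzero, because the highest derivative occurring in a linear relation
isolates one of its coefficients. Differentiating the expansion of `Φ (p ^ m x ^ n)` exactly
`m - s` times in `p` and `n - s` times in `x`, and comparing the coefficients of `F^{(0,0)}`,
expresses `g (m, n, s)` through `g (s, s, s)`.
-/

section Appell

variable {K M N : Type*}

section CommSemiring

variable [CommSemiring K] [AddCommMonoid M] [Module K M] [AddCommMonoid N] [Module K N]

theorem pow_apply_of_lowering {S : Module.End K M} {f : ℕ → M}
    (hS : ∀ m, S (f m) = (m : K) • f (m - 1)) (k m : ℕ) :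
    (S ^ k) (f m) = (m.descFactorial k : K) • f (m - k) := by
  induction k with
  | zero => simp
  | succ k ih =>
    rw [pow_succ', Module.End.mul_apply, ih, map_smul, hS, smul_smul, Nat.descFactorial_succ,
      Nat.cast_mul, mul_comm, Nat.sub_sub]

/-- A bivariate Appell family: `S` and `T` act on `f m n` the way `∂_p` and `∂_x` act on the
monomial `p ^ m x ^ n`. The truncated subtractions are harmless, because the scalar vanishes at
index `0`. -/
structure IsAppellFamily (S T : Module.End K M) (f : ℕ → ℕ → M) : Prop where
  left_apply : ∀ m n, S (f m n) = (m : K) • f (m - 1) n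
  right_apply : ∀ m n, T (f m n) = (n : K) • f m (n - 1)

namespace IsAppellFamily

variable {S T : Module.End K M} {f : ℕ → ℕ → M}

theorem map (hf : IsAppellFamily S T f) (Φ : M →ₗ[K] N) {S' T' : Module.End K N}
    (hS : ∀ v, S' (Φ v) = Φ (S v)) (hT : ∀ v, T' (Φ v) = Φ (T v)) :
    IsAppellFamily S' T' fun m n => Φ (f m n) where
  left_apply m n := by rw [hS, hf.left_apply, map_smul]
  right_apply m n := by rw [hT, hf.right_apply, map_smul]

theorem pow_mul_pow_apply (hf : IsAppellFamily S T f) (i j m n : ℕ) :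
    (S ^ i * T ^ j) (f m n) =
      (m.descFactorial i * n.descFactorial j : K) • f (m - i) (n - j) := by
  rw [Module.End.mul_apply, pow_apply_of_lowering (hf.right_apply m), map_smul,
    pow_apply_of_lowering (f := fun m => f m (n - j)) (fun m => hf.left_apply m (n - j)),
    smul_smul, mul_comm]

theorem pow_mul_pow_apply_self (hf : IsAppellFamily S T f) (m n : ℕ) :
    (S ^ m * T ^ n) (f m n) = (m.factorial * n.factorial : K) • f 0 0 := by
  simp only [hf.pow_mul_pow_apply, Nat.descFactorial_self, Nat.sub_self]

theorem pow_mul_pow_apply_eq_zero (hf : IsAppellFamily S T f) {i j m n : ℕ}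
    (hlt : m < i ∨ n < j) : (S ^ i * T ^ j) (f m n) = 0 := by
  rw [hf.pow_mul_pow_apply]
  rcases hlt with hlt | hlt <;> simp [Nat.descFactorial_of_lt hlt]

end IsAppellFamily

end CommSemiring

namespace IsAppellFamily

-- For `(i, j)` of maximal total degree in the support of a linear relation, `S ^ i * T ^ j` kills
-- every term of the relation except the one at `(i, j)`.
theorem linearIndependent [CommRing K] [IsDomain K] [CharZero K] [AddCommGroup M] [Module K M]
    [Module.IsTorsionFree K M] {S T : Module.End K M} {f : ℕ → ℕ → M}
    (hf : IsAppellFamily S T f) (hf₀ : f 0 0 ≠ 0) :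
    LinearIndependent K fun d : ℕ × ℕ => f d.1 d.2 := by
  rw [linearIndependent_iff]
  intro c hc
  by_contra hne
  obtain ⟨d, hd, hmax⟩ := c.support.exists_max_image (fun d => d.1 + d.2)
    (Finsupp.support_nonempty_iff.mpr hne)
  have hvanish : ∀ d' ∈ c.support, d' ≠ d → c d' • (S ^ d.1 * T ^ d.2) (f d'.1 d'.2) = 0 := by
    intro d' hd' hdd'
    have hle := hmax d' hd'
    rw [Ne, Prod.ext_iff] at hdd'
    rw [hf.pow_mul_pow_apply_eq_zero (by omega), smul_zero]
  have htop : c d • (d.1.factorial * d.2.factorial : K) • f 0 0 = 0 := by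
    rw [← hf.pow_mul_pow_apply_self, ← Finset.sum_eq_single_of_mem d hd hvanish]
    simpa [Finsupp.linearCombination_apply, Finsupp.sum] using congrArg (S ^ d.1 * T ^ d.2) hc
  have hfac (k : ℕ) : (k.factorial : K) ≠ 0 := mod_cast k.factorial_ne_zero
  exact smul_ne_zero (Finsupp.mem_support_iff.mp hd)
    (smul_ne_zero (mul_ne_zero (hfac _) (hfac _)) hf₀) htop

variable [Field K] [CharZero K] [AddCommGroup M] [Module K M]
variable {S T : Module.End K M} {f q : ℕ → ℕ → M}

theorem exists_dual_pow_mul_pow_apply (hf : IsAppellFamily S T f) (hf₀ : f 0 0 ≠ 0) :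
    ∃ ε : Module.Dual K M, ∀ i j m n, ε ((S ^ i * T ^ j) (f m n)) =
      if m = i ∧ n = j then (i.factorial * j.factorial : K) else 0 := by
  obtain ⟨coeff, hcoeff⟩ := LinearMap.exists_leftInverse_of_injective _
    (LinearMap.ker_eq_bot.mpr (hf.linearIndependent hf₀))
  have hcoeff_apply (m n : ℕ) : coeff (f m n) = Finsupp.single (m, n) 1 := by
    simpa using LinearMap.congr_fun hcoeff (Finsupp.single (m, n) 1)
  refine ⟨Finsupp.lapply (0, 0) ∘ₗ coeff, fun i j m n => ?_⟩
  by_cases hlt : m < i ∨ n < j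
  · rw [hf.pow_mul_pow_apply_eq_zero hlt, map_zero, if_neg (by omega)]
  · split_ifs with heq
    · obtain ⟨rfl, rfl⟩ := heq
      simp [hf.pow_mul_pow_apply_self, hcoeff_apply]
    · have hsub : (m - i, n - j) ≠ (0, 0) := by
        rw [Ne, Prod.mk.injEq]
        omega
      simp [hf.pow_mul_pow_apply, hcoeff_apply, Finsupp.single_eq_of_ne hsub.symm]

-- Apply `ε ∘ (S ^ (m - s) * T ^ (n - s))` to `q m n`: the Appell property of `q` gives a multiple
-- of `ε (q s s)`, that of `f` isolates the coefficient with index `s`.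
theorem coeff_eq_mul_diagonal_coeff (hf : IsAppellFamily S T f) (hf₀ : f 0 0 ≠ 0)
    (hq : IsAppellFamily S T q) {γ : ℕ → ℕ → ℕ → K}
    (hγ : ∀ m n, q m n = ∑ s ∈ range (min m n + 1), γ m n s • f (m - s) (n - s))
    {m n s : ℕ} (hm : s ≤ m) (hn : s ≤ n) :
    γ m n s = (m.factorial * n.factorial : K) /
      (s.factorial ^ 2 * (m - s).factorial * (n - s).factorial) * γ s s s := by
  obtain ⟨ε, hε⟩ := hf.exists_dual_pow_mul_pow_apply hf₀
  have extract (m n s : ℕ) (hm : s ≤ m) (hn : s ≤ n) :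
      ε ((S ^ (m - s) * T ^ (n - s)) (q m n)) =
        γ m n s * ((m - s).factorial * (n - s).factorial) := by
    rw [hγ, map_sum, map_sum, Finset.sum_eq_single_of_mem s (Finset.mem_range.mpr (by omega))]
    · simp only [map_smul, hε, and_self, if_true, smul_eq_mul]
    · intro t ht hts
      rw [Finset.mem_range] at ht
      rw [map_smul, map_smul, hε, if_neg (by omega), smul_zero]
  have hqs : ε (q s s) = γ s s s := by simpa using extract s s s le_rfl le_rfl
  have hcompare := extract m n s hm hn
  rw [hq.pow_mul_pow_apply, Nat.sub_sub_self hm, Nat.sub_sub_self hn, map_smul, hqs,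
    smul_eq_mul] at hcompare
  have factorial_eq {k : ℕ} (hk : s ≤ k) :
      (k.factorial : K) = s.factorial * k.descFactorial (k - s) := by
    rw [← Nat.factorial_mul_descFactorial (Nat.sub_le k s), Nat.sub_sub_self hk, Nat.cast_mul]
  have hfac (k : ℕ) : (k.factorial : K) ≠ 0 := mod_cast k.factorial_ne_zero
  have := hfac s
  have := hfac (m - s)
  have := hfac (n - s)
  rw [factorial_eq hm, factorial_eq hn]
  field_simp
  linear_combination -hcompare

end IsAppellFamily

end Appell

theorem isAppellFamily_monomials (K : Type*) [CommSemiring K] :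
    IsAppellFamily (pderiv (1 : Fin 2)).toLinearMap (pderiv (0 : Fin 2)).toLinearMap
      fun m n => (X 1 ^ m * X 0 ^ n : MvPolynomial (Fin 2) K) where
  left_apply m n := by
    rw [Derivation.coeFn_coe, pderiv_mul, pderiv_pow, pderiv_pow, pderiv_X_self,
      pderiv_X_of_ne zero_ne_one, smul_eq_C_mul, map_natCast]
    ring
  right_apply m n := by
    rw [Derivation.coeFn_coe, pderiv_mul, pderiv_pow, pderiv_pow, pderiv_X_self,
      pderiv_X_of_ne one_ne_zero, smul_eq_C_mul, map_natCast]
    ring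

section CanonicalPair

attribute [local instance] LieRing.ofAssociativeRing

variable {K R : Type*} [Ring R]

theorem lie_pow_of_lie_eq_smul_one [CommSemiring K] [Algebra K R] {x y : R} {κ : K}
    (h : ⁅x, y⁆ = κ • (1 : R)) (m : ℕ) : ⁅x, y ^ m⁆ = (κ * m) • y ^ (m - 1) := by
  induction m with
  | zero => simp [Ring.lie_def]
  | succ m ih =>
    have leibniz : ⁅x, y ^ (m + 1)⁆ = ⁅x, y ^ m⁆ * y + y ^ m * ⁅x, y⁆ := by
      simp only [Ring.lie_def, pow_succ]
      noncomm_ring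
    rw [leibniz, ih, h]
    rcases m with _ | m
    · simp
    · simp only [Nat.add_sub_cancel, smul_mul_assoc, mul_smul_comm, mul_one, ← pow_succ,
        ← add_smul]
      congr 1
      push_cast
      ring

variable [Field K] [Algebra K R] {x p : R} {κ : K}

theorem isAppellFamily_pow_mul_pow (hκ : κ ≠ 0) (hxp : ⁅x, p⁆ = κ • (1 : R)) :
    IsAppellFamily (κ⁻¹ • LieAlgebra.ad K R x) ((-κ)⁻¹ • LieAlgebra.ad K R p)
      fun m n => p ^ m * x ^ n where
  left_apply m n := by
    have hx : ⁅x, p ^ m * x ^ n⁆ = ⁅x, p ^ m⁆ * x ^ n := by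
      simp only [Ring.lie_def, sub_mul, mul_assoc, ← pow_succ, ← pow_succ']
    simp [hx, lie_pow_of_lie_eq_smul_one hxp, smul_smul, hκ]
  right_apply m n := by
    have hpx : ⁅p, x⁆ = (-κ) • (1 : R) := by rw [← lie_skew, hxp, neg_smul]
    have hp : ⁅p, p ^ m * x ^ n⁆ = p ^ m * ⁅p, x ^ n⁆ := by
      simp only [Ring.lie_def, mul_sub, ← mul_assoc, ← pow_succ, ← pow_succ']
    simp [hp, lie_pow_of_lie_eq_smul_one hpx, smul_smul, hκ]

theorem stmt1_general [CharZero K] [Nontrivial R] (hκ : κ ≠ 0) (hxp : ⁅x, p⁆ = κ • (1 : R))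
    {η : K} (hη : η ≠ 0) (g : ℕ × ℕ × ℕ → K) (hg : g (0, 0, 0) = 1)
    (Φ : MvPolynomial (Fin 2) K →ₗ[K] R)
    (hΦ : ∀ m n : ℕ, Φ (X 1 ^ m * X 0 ^ n) =
      ∑ s ∈ range (min m n + 1), (g (m, n, s) * η ^ s) • (p ^ (m - s) * x ^ (n - s)))
    (hx : ∀ A, ⁅x, Φ A⁆ = κ • Φ (pderiv 1 A))
    (hp : ∀ A, ⁅p, Φ A⁆ = (-κ) • Φ (pderiv 0 A)) :
    ∃ c : ℕ → K, c 0 = 1 ∧ ∀ m n s : ℕ, s ≤ min m n →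
      g (m, n, s) = (-1 : K) ^ s *
        ((m.factorial * n.factorial : K) /
          (s.factorial * (m - s).factorial * (n - s).factorial)) * c s := by
  have hΦ_appell := (isAppellFamily_monomials K).map Φ
    (S' := κ⁻¹ • LieAlgebra.ad K R x) (T' := (-κ)⁻¹ • LieAlgebra.ad K R p)
    (fun A => by simp [hx, hκ]) (fun A => by simp [hp, hκ])
  refine ⟨fun s => (-1) ^ s * g (s, s, s) / s.factorial, by simp [hg], fun m n s hs => ?_⟩
  have hcoeff := (isAppellFamily_pow_mul_pow hκ hxp).coeff_eq_mul_diagonal_coeff (by simp) hΦ_appell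
    (γ := fun m n s => g (m, n, s) * η ^ s) hΦ (le_min_iff.mp hs).1 (le_min_iff.mp hs).2
  rw [← mul_assoc] at hcoeff
  have hsign : (-1 : K) ^ s * (-1) ^ s = 1 := by rw [← mul_pow, neg_one_mul, neg_neg, one_pow]
  rw [mul_right_cancel₀ (pow_ne_zero s hη) hcoeff]
  linear_combination (-((m.factorial * n.factorial : K) /
      (s.factorial ^ 2 * (m - s).factorial * (n - s).factorial) * g (s, s, s))) * hsign

end CanonicalPair

theorem aop_single_zero (z : ℂ) : aop (Finsupp.single 0 z) = 0 := by
  simp [aop]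

theorem aop_single_succ (n : ℕ) (z : ℂ) :
    aop (Finsupp.single (n + 1) z) = (√(n + 1 : ℝ) : ℂ) • Finsupp.single n z := by
  simp [aop]

theorem adop_single (n : ℕ) (z : ℂ) :
    adop (Finsupp.single n z) = (√(n + 1 : ℝ) : ℂ) • Finsupp.single (n + 1) z := by
  simp [adop]

theorem ofReal_sqrt_mul_self_natCast_add_one (n : ℕ) :
    (√(n + 1 : ℝ) : ℂ) * √(n + 1 : ℝ) = n + 1 := by
  rw [← ofReal_mul, Real.mul_self_sqrt n.cast_add_one_pos.le, ofReal_add, ofReal_natCast,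
    ofReal_one]

theorem aop_adop_single (n : ℕ) (z : ℂ) :
    aop (adop (Finsupp.single n z)) = (n + 1 : ℂ) • Finsupp.single n z := by
  rw [adop_single, map_smul, aop_single_succ, smul_smul, ofReal_sqrt_mul_self_natCast_add_one]

theorem adop_aop_single (n : ℕ) (z : ℂ) :
    adop (aop (Finsupp.single n z)) = (n : ℂ) • Finsupp.single n z := by
  rcases n with _ | n
  · rw [aop_single_zero, map_zero, Nat.cast_zero, zero_smul]
  · rw [aop_single_succ, map_smul, adop_single, smul_smul, ofReal_sqrt_mul_self_natCast_add_one,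
      Nat.cast_succ]

theorem aop_mul_adop_sub_adop_mul_aop :
    (aop * adop - adop * aop : Module.End ℂ (ℕ →₀ ℂ)) = 1 := by
  refine Finsupp.lhom_ext fun n z => ?_
  rw [LinearMap.sub_apply, Module.End.mul_apply, Module.End.mul_apply, aop_adop_single,
    adop_aop_single, ← sub_smul, add_sub_cancel_left, one_smul, Module.End.one_apply]

theorem lie_adop_neg_smul_aop (κ : ℂ) :
    ⁅(adop : Module.End ℂ (ℕ →₀ ℂ)), (-κ) • (aop : Module.End ℂ (ℕ →₀ ℂ))⁆ =
      κ • (1 : Module.End ℂ (ℕ →₀ ℂ)) := by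
  rw [← aop_mul_adop_sub_adop_mul_aop, Ring.lie_def, mul_smul_comm, smul_mul_assoc]
  module

/-- if `g(m,n,0) = 1` and the linear map `Φ` defined on the monomial basis by
`Φ(p^m x^n) = Σ_{s=0}^{min(m,n)} g(m,n,s) ℏ^s F^{(m−s,n−s)}` satisfies the modified Dirac
quantization rules, then `g(m,n,s) = (−1)^s (m!n!/(s!(m−s)!(n−s)!)) c_s` for some sequence `c`
with `c 0 = 1`. -/
theorem stmt1 (ℏ : ℝ) (hℏ : ℏ ≠ 0) (g : ℕ × ℕ × ℕ → ℂ)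
    (hg : ∀ m n : ℕ, g (m, n, 0) = 1)
    (Φ : Pxp →ₗ[ℂ] Module.End ℂ (ℕ →₀ ℂ))
    (hΦ : ∀ m n : ℕ, Φ (pv ^ m * xv ^ n) =
      ∑ s ∈ Finset.range (min m n + 1), (g (m, n, s) * (ℏ : ℂ) ^ s) • F ℏ (m - s) (n - s))
    (hx : ∀ A : Pxp,
      (adop : Module.End ℂ (ℕ →₀ ℂ)) * Φ A - Φ A * (adop : Module.End ℂ (ℕ →₀ ℂ)) =
        (Complex.I * ℏ) • Φ (Dp A))
    (hp : ∀ A : Pxp,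
      ((-(Complex.I * ℏ)) • (aop : Module.End ℂ (ℕ →₀ ℂ))) * Φ A -
          Φ A * ((-(Complex.I * ℏ)) • (aop : Module.End ℂ (ℕ →₀ ℂ))) =
        (-(Complex.I * ℏ)) • Φ (Dx A)) :
    ∃ c : ℕ → ℂ, c 0 = 1 ∧ ∀ m n s : ℕ, s ≤ min m n →
      g (m, n, s) = (-1 : ℂ) ^ s *
        ((m.factorial * n.factorial : ℂ) /
          (s.factorial * (m - s).factorial * (n - s).factorial)) * c s :=
  stmt1_general (x := adop) (p := (-(I * ℏ)) • aop) (mul_ne_zero I_ne_zero (ofReal_ne_zero.mpr hℏ))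
    (lie_adop_neg_smul_aop _) (ofReal_ne_zero.mpr hℏ) g (hg 0 0) Φ hΦ hx hp

end
end

section
/- Let α : ℕ → ℂ be a sequence with α_0 = 1, let α̂ be the associated automorphism of ℂ[x,p], and define the generalized star product A ⋆_α B = α̂⁻¹((α̂ A) ⋆ (α̂ B)), where ⋆ is the Moyal product. Define g_α(m,n,s) = (i/2)^s · (m!·n!/((m−s)!·(n−s)!)) · Σ_{k=0}^s (2i)^k · α_k/(s−k)!, and define the linear map Φ_α : ℂ[x,p] → End_ℂ(V) on the monomial basis by Φ_α(p^m x^n) = Σ_{s=0}^{min(m,n)} g_α(m,n,s) · ħ^s · F^{(m−s,n−s)}. Then for all polynomials A, B ∈ ℂ[x,p]: Φ_α(A ⋆_α B) = Φ_α(A) ∘ Φ_α(B). -/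
open Complex MvPolynomial Finset

noncomputable section

/-- The Moyal product
`A ⋆ B = Σ_k (1/k!)(iℏ/2)^k Σ_{j=0}^k (−1)^j C(k,j) (∂_x^{k−j}∂_p^j A)(∂_x^j ∂_p^{k−j} B)`
(a finite sum for polynomials). -/
def moyal (ℏ : ℝ) (A B : Pxp) : Pxp :=
  ∑ k ∈ Finset.range (A.totalDegree + 1),
    ((1 / (k.factorial : ℂ)) * (Complex.I * ℏ / 2) ^ k) •
      ∑ j ∈ Finset.range (k + 1),
        ((-1 : ℂ) ^ j * (k.choose j : ℂ)) •
          (((Dx ^ (k - j) * Dp ^ j) A) * ((Dx ^ j * Dp ^ (k - j)) B))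

/-- `g_α(m,n,s) = (i/2)^s (m!n!/((m−s)!(n−s)!)) Σ_{k=0}^s (2i)^k α_k/(s−k)!`. -/
def gα (α : ℕ → ℂ) (m n s : ℕ) : ℂ :=
  (Complex.I / 2) ^ s *
    ((m.factorial * n.factorial : ℂ) / ((m - s).factorial * (n - s).factorial)) *
    ∑ k ∈ Finset.range (s + 1), (2 * Complex.I) ^ k * α k / ((s - k).factorial : ℂ)

/-!
Put `c = iℏ/2`. The map `Φ_α` is `W ∘ α̂`, where `W` sends `A` to the normal ordering of
`exp (c ∂ₓ ∂ₚ) A` and is Weyl quantization, so it suffices that `W` turns the Moyal product into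
composition. Left Moyal multiplications by `x` and `p` are the Bopp shifts `x + c ∂ₚ` and
`p - c ∂ₓ`, and `W` carries these to left multiplication by the operators `X = a†` and `P = -iℏ a`.
Hence, for fixed `B`, the maps `A ↦ W (A ⋆ B)` and `A ↦ W A * W B` intertwine the same operators and
agree at `1`, from which the Bopp shifts generate `ℂ[x,p]`. Every intertwining relation comes from
`exp (c f) g = (g + c [f, g]) exp (c f)`, valid when `f` commutes with `[f, g]`.
-/

open scoped PowerSeries TensorProduct

lemma pow_succ_mul_of_mul_eq {A : Type*} [Semiring A] {a b c : A} (hab : a * b = b * a + c)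
    (hac : Commute a c) (k : ℕ) : a ^ (k + 1) * b = b * a ^ (k + 1) + (k + 1) • (c * a ^ k) := by
  induction k with
  | zero => simpa using hab
  | succ k ih =>
    calc a ^ (k + 1 + 1) * b
        = a * (a ^ (k + 1) * b) := by rw [pow_succ' a (k + 1), mul_assoc]
      _ = a * b * a ^ (k + 1) + (k + 1) • (a * c * a ^ k) := by
          rw [ih, mul_add, mul_smul_comm, mul_assoc, mul_assoc]
      _ = b * a ^ (k + 1 + 1) + (k + 1 + 1) • (c * a ^ (k + 1)) := by
          rw [hab, hac.eq, add_mul, mul_assoc c, mul_assoc b, ← pow_succ', ← pow_succ',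
            succ_nsmul' _ (k + 1), add_assoc]

lemma derivative_rescale {R : Type*} [CommSemiring R] (c : R) (φ : R⟦X⟧) :
    d⁄dX R (.rescale c φ) = c • PowerSeries.rescale c (d⁄dX R φ) := by
  ext n
  simp only [PowerSeries.coeff_derivative, PowerSeries.coeff_rescale, PowerSeries.coeff_smul,
    smul_eq_mul]
  ring

lemma derivative_rescale_exp {R : Type*} [CommRing R] [Algebra ℚ R] (c : R) :
    d⁄dX R (.rescale c (.exp R)) = c • PowerSeries.rescale c (.exp R) := by
  rw [derivative_rescale, PowerSeries.derivative_exp]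

section LocallyNilpotent

variable {R M : Type*} [CommSemiring R] [AddCommMonoid M] [Module R M]

/-- An endomorphism is locally nilpotent if every vector is killed by one of its powers; such
endomorphisms are the ones at which every formal power series can be evaluated. -/
def IsLocallyNilpotent (f : Module.End R M) : Prop := ∀ x, ∃ n, (f ^ n) x = 0

namespace IsLocallyNilpotent

lemma support_subset_range {f : Module.End R M} {x : M} {n : ℕ} (hx : (f ^ n) x = 0)
    (φ : R⟦X⟧) :
    (Function.support fun k ↦ PowerSeries.coeff k φ • (f ^ k) x) ⊆ Finset.range n := by
  intro k hk
  by_contra hkn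
  rw [Finset.mem_coe, Finset.mem_range, not_lt] at hkn
  exact hk (by simp only [Module.End.pow_map_zero_of_le hkn hx, smul_zero])

lemma finite_support {f : Module.End R M} (hf : IsLocallyNilpotent f) (φ : R⟦X⟧) (x : M) :
    (Function.support fun k ↦ PowerSeries.coeff k φ • (f ^ k) x).Finite :=
  let ⟨n, hn⟩ := hf x
  (Finset.range n).finite_toSet.subset (support_subset_range hn φ)

variable {f : Module.End R M} (hf : IsLocallyNilpotent f)

/-- The operator `φ(f) = ∑ₖ φₖ fᵏ` for a power series `φ` and a locally nilpotent `f`; the sum is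
finite on each vector. -/
def eval (φ : R⟦X⟧) : Module.End R M where
  toFun x := ∑ᶠ k, PowerSeries.coeff k φ • (f ^ k) x
  map_add' x y := by
    simp only [map_add, smul_add]
    exact finsum_add_distrib (hf.finite_support φ x) (hf.finite_support φ y)
  map_smul' c x := by
    simp only [map_smul, smul_comm _ c, RingHom.id_apply]
    exact (smul_finsum' c (hf.finite_support φ x)).symm

lemma eval_apply (φ : R⟦X⟧) {x : M} {n : ℕ} (hx : (f ^ n) x = 0) :
    hf.eval φ x = ∑ k ∈ range n, PowerSeries.coeff k φ • (f ^ k) x :=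
  finsum_eq_sum_of_support_subset _ (support_subset_range hx φ)

lemma eval_apply_eq_aeval_trunc (φ : R⟦X⟧) {x : M} {n : ℕ} (hx : (f ^ n) x = 0) :
    hf.eval φ x = Polynomial.aeval f (φ.trunc n) x := by
  rw [hf.eval_apply φ hx, Polynomial.aeval_def, PowerSeries.eval₂_trunc_eq_sum_range,
    LinearMap.sum_apply]
  simp only [Module.End.mul_apply, Module.algebraMap_end_apply]

lemma eval_coe (p : Polynomial R) : hf.eval p = Polynomial.aeval f p := by
  ext x
  obtain ⟨n, hn⟩ := hf x
  have hx : (f ^ (n + p.natDegree + 1)) x = 0 := Module.End.pow_map_zero_of_le (by omega) hn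
  rw [hf.eval_apply_eq_aeval_trunc _ hx, PowerSeries.trunc_coe_eq_self (by omega)]

lemma eval_mul (φ ψ : R⟦X⟧) : hf.eval (φ * ψ) = hf.eval φ * hf.eval ψ := by
  ext x
  obtain ⟨n, hx⟩ := hf x
  have hψx : (f ^ n) (Polynomial.aeval f (ψ.trunc n) x) = 0 := by
    have hcomm : Commute (f ^ n) (Polynomial.aeval f (ψ.trunc n)) := by
      simpa using (Commute.all (Polynomial.X ^ n) (ψ.trunc n)).map (Polynomial.aeval f)
    rw [← Module.End.mul_apply, hcomm.eq, Module.End.mul_apply, hx, map_zero]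
  calc hf.eval (φ * ψ) x
      = hf.eval ((φ.trunc n * ψ.trunc n : Polynomial R) : R⟦X⟧) x := by
        rw [hf.eval_apply_eq_aeval_trunc _ hx, hf.eval_apply_eq_aeval_trunc _ hx,
          Polynomial.coe_mul, PowerSeries.trunc_trunc_mul_trunc]
    _ = Polynomial.aeval f (φ.trunc n) (Polynomial.aeval f (ψ.trunc n) x) := by
        rw [eval_coe, map_mul, Module.End.mul_apply]
    _ = (hf.eval φ * hf.eval ψ) x := by
        rw [Module.End.mul_apply, hf.eval_apply_eq_aeval_trunc ψ hx,
          hf.eval_apply_eq_aeval_trunc φ hψx]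

lemma eval_smul (c : R) (φ : R⟦X⟧) : hf.eval (c • φ) = c • hf.eval φ := by
  ext x
  obtain ⟨n, hx⟩ := hf x
  simp only [LinearMap.smul_apply, hf.eval_apply _ hx, PowerSeries.coeff_smul, smul_eq_mul,
    mul_smul, smul_sum]

lemma eval_mul_of_mul_eq {g h : Module.End R M} (hfg : f * g = g * f + h) (hfh : Commute f h)
    (φ : R⟦X⟧) : hf.eval φ * g = g * hf.eval φ + h * hf.eval (d⁄dX R φ) := by
  ext x
  obtain ⟨n, hx⟩ := hf x
  have hx' : (f ^ (n + 1)) x = 0 := Module.End.pow_map_zero_of_le n.le_succ hx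
  have hpow (k : ℕ) : (f ^ (k + 1)) (g x) = g ((f ^ (k + 1)) x) + (k + 1) • h ((f ^ k) x) :=
    LinearMap.congr_fun (pow_succ_mul_of_mul_eq hfg hfh k) x
  have hgx : (f ^ (n + 1)) (g x) = 0 := by rw [hpow, hx', hx]; simp
  rw [LinearMap.add_apply, Module.End.mul_apply, Module.End.mul_apply, Module.End.mul_apply,
    hf.eval_apply φ hgx, hf.eval_apply φ hx', hf.eval_apply _ hx, sum_range_succ',
    sum_range_succ']
  simp only [hpow, map_add, map_sum, map_smul, smul_add, sum_add_distrib,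
    PowerSeries.coeff_derivative, pow_zero, Module.End.one_apply, add_right_comm]
  congr 2
  ext k
  rw [mul_smul, ← Nat.cast_succ, Nat.cast_smul_eq_nsmul]

lemma eval_exp_mul {R M : Type*} [CommRing R] [Algebra ℚ R] [AddCommMonoid M] [Module R M]
    {f g h : Module.End R M} (hf : IsLocallyNilpotent f) (hfg : f * g = g * f + h)
    (hfh : Commute f h) (c : R) :
    hf.eval (.rescale c (.exp R)) * g = (g + c • h) * hf.eval (.rescale c (.exp R)) := by
  rw [hf.eval_mul_of_mul_eq hfg hfh, derivative_rescale_exp, eval_smul, mul_smul_comm, add_mul,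
    smul_mul_assoc]

end IsLocallyNilpotent

end LocallyNilpotent

section PartialDerivatives

lemma derivation_mul_mulLeft {R A : Type*} [CommSemiring R] [CommSemiring A] [Algebra R A]
    (D : Derivation R A A) (a : A) :
    D.toLinearMap * LinearMap.mulLeft R a =
      LinearMap.mulLeft R a * D.toLinearMap + LinearMap.mulLeft R (D a) := by
  refine LinearMap.ext fun b ↦ ?_
  simp [mul_comm]

lemma commute_pderiv {σ R : Type*} [CommSemiring R] (i j : σ) :
    Commute (pderiv i : Derivation R (MvPolynomial σ R) (MvPolynomial σ R)).toLinearMap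
      (pderiv j).toLinearMap := by
  obtain rfl | hij := eq_or_ne i j
  · exact Commute.refl _
  · refine LinearMap.ext fun A ↦ MvPolynomial.ext _ _ fun m ↦ ?_
    simp [coeff_pderiv, hij, hij.symm, add_right_comm, mul_right_comm]

lemma Dx_apply (A : Pxp) : Dx A = pderiv 0 A := rfl

lemma Dp_apply (A : Pxp) : Dp A = pderiv 1 A := rfl

lemma commute_Dx_Dp : Commute Dx Dp := commute_pderiv 0 1

lemma Dx_mul_mulLeft_xv :
    Dx * LinearMap.mulLeft ℂ xv = LinearMap.mulLeft ℂ xv * Dx + 1 := by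
  have h := derivation_mul_mulLeft (pderiv 0) xv
  rwa [xv, pderiv_X_self, LinearMap.mulLeft_one] at h

lemma Dp_mul_mulLeft_pv :
    Dp * LinearMap.mulLeft ℂ pv = LinearMap.mulLeft ℂ pv * Dp + 1 := by
  have h := derivation_mul_mulLeft (pderiv 1) pv
  rwa [pv, pderiv_X_self, LinearMap.mulLeft_one] at h

lemma commute_Dx_mulLeft_pv : Commute Dx (LinearMap.mulLeft ℂ pv) := by
  have h := derivation_mul_mulLeft (pderiv 0) pv
  rwa [pv, pderiv_X_of_ne (by decide), LinearMap.mulLeft_zero_eq_zero, add_zero] at h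

lemma commute_Dp_mulLeft_xv : Commute Dp (LinearMap.mulLeft ℂ xv) := by
  have h := derivation_mul_mulLeft (pderiv 1) xv
  rwa [xv, pderiv_X_of_ne (by decide), LinearMap.mulLeft_zero_eq_zero, add_zero] at h

lemma Dx_mul_Dp_mul_mulLeft_xv :
    Dx * Dp * LinearMap.mulLeft ℂ xv = LinearMap.mulLeft ℂ xv * (Dx * Dp) + Dp := by
  rw [mul_assoc, commute_Dp_mulLeft_xv.eq, ← mul_assoc, Dx_mul_mulLeft_xv, add_mul, one_mul,
    mul_assoc]

lemma Dx_mul_Dp_mul_mulLeft_pv :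
    Dx * Dp * LinearMap.mulLeft ℂ pv = LinearMap.mulLeft ℂ pv * (Dx * Dp) + Dx := by
  rw [mul_assoc, Dp_mul_mulLeft_pv, mul_add, mul_one, ← mul_assoc, commute_Dx_mulLeft_pv.eq,
    mul_assoc]

lemma Dx_pv_pow_mul_xv_pow (m n : ℕ) :
    Dx (pv ^ m * xv ^ n) = (n : ℂ) • (pv ^ m * xv ^ (n - 1)) := by
  simp [Dx, pv, xv, pderiv_X, smul_eq_C_mul, mul_left_comm]

lemma Dp_pv_pow_mul_xv_pow (m n : ℕ) :
    Dp (pv ^ m * xv ^ n) = (m : ℂ) • (pv ^ (m - 1) * xv ^ n) := by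
  simp [Dp, pv, xv, pderiv_X, smul_eq_C_mul, mul_left_comm, mul_comm]

lemma Dx_pow_mul_Dp_pow_apply (a b m n : ℕ) :
    (Dx ^ a * Dp ^ b) (pv ^ m * xv ^ n) =
      (m.descFactorial b * n.descFactorial a : ℂ) • (pv ^ (m - b) * xv ^ (n - a)) := by
  induction a with
  | zero =>
    induction b with
    | zero => simp
    | succ b ih =>
      rw [pow_zero, one_mul] at ih ⊢
      rw [pow_succ', Module.End.mul_apply, ih, map_smul, Dp_pv_pow_mul_xv_pow, smul_smul,
        Nat.descFactorial_succ m, Nat.sub_sub]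
      push_cast
      ring_nf
  | succ a ih =>
    rw [pow_succ', mul_assoc, Module.End.mul_apply, ih, map_smul, Dx_pv_pow_mul_xv_pow,
      smul_smul, Nat.descFactorial_succ n, Nat.sub_sub]
    push_cast
    ring_nf

lemma monomial_eq_smul_pv_pow_mul_xv_pow (u : Fin 2 →₀ ℕ) (a : ℂ) :
    (monomial u a : Pxp) = a • (pv ^ u 1 * xv ^ u 0) := by
  rw [monomial_eq, Finsupp.prod_fintype _ _ (by simp), Fin.prod_univ_two, smul_eq_C_mul, pv, xv,
    mul_comm (X 1 ^ u 1)]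

lemma linearMap_ext_pv_pow_mul_xv_pow {M : Type*} [AddCommMonoid M] [Module ℂ M]
    {f g : Pxp →ₗ[ℂ] M} (h : ∀ m n : ℕ, f (pv ^ m * xv ^ n) = g (pv ^ m * xv ^ n)) : f = g :=
  (basisMonomials (Fin 2) ℂ).ext fun u ↦ by
    simpa [monomial_eq_smul_pv_pow_mul_xv_pow] using h (u 1) (u 0)

lemma Dx_pow_mul_Dp_pow_eq_zero {a b : ℕ} {A : Pxp} (hA : A.totalDegree < a + b) :
    (Dx ^ a * Dp ^ b) A = 0 := by
  rw [A.as_sum, map_sum]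
  refine sum_eq_zero fun u hu ↦ ?_
  have hdeg : u 0 + u 1 ≤ A.totalDegree := by
    simpa [Finsupp.sum_fintype, Fin.sum_univ_two] using le_totalDegree hu
  rw [monomial_eq_smul_pv_pow_mul_xv_pow, map_smul, Dx_pow_mul_Dp_pow_apply]
  rcases (by omega : u 1 < b ∨ u 0 < a) with h | h <;> simp [Nat.descFactorial_of_lt h]

lemma Dx_mul_Dp_pow_eq_zero {k : ℕ} {A : Pxp} (hA : A.totalDegree < k) :
    ((Dx * Dp) ^ k) A = 0 := by
  rw [commute_Dx_Dp.mul_pow, Dx_pow_mul_Dp_pow_eq_zero (by omega)]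

lemma isLocallyNilpotent_Dx_mul_Dp : IsLocallyNilpotent (Dx * Dp) :=
  fun A ↦ ⟨A.totalDegree + 1, Dx_mul_Dp_pow_eq_zero A.totalDegree.lt_succ_self⟩

lemma eval_Dx_mul_Dp_apply (φ : ℂ⟦X⟧) (m n : ℕ) :
    isLocallyNilpotent_Dx_mul_Dp.eval φ (pv ^ m * xv ^ n) =
      ∑ s ∈ range (min m n + 1),
        (PowerSeries.coeff s φ * (m.descFactorial s * n.descFactorial s)) •
          (pv ^ (m - s) * xv ^ (n - s)) := by
  have hzero : ((Dx * Dp) ^ (min m n + 1)) (pv ^ m * xv ^ n) = 0 := by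
    rw [commute_Dx_Dp.mul_pow, Dx_pow_mul_Dp_pow_apply]
    rcases (by omega : m < min m n + 1 ∨ n < min m n + 1) with h | h <;>
      rw [Nat.descFactorial_of_lt h] <;> simp
  rw [isLocallyNilpotent_Dx_mul_Dp.eval_apply φ hzero]
  simp only [commute_Dx_Dp.mul_pow, Dx_pow_mul_Dp_pow_apply, smul_smul]

end PartialDerivatives

section Moyal

/-- The operator `D ⊗ 1`, acting on the left argument of a bilinear product on `ℂ[x,p]`. -/
def onLeft : Module.End ℂ Pxp →ₐ[ℂ] Module.End ℂ (Pxp ⊗[ℂ] Pxp) :=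
  Module.End.rTensorAlgHom ℂ Pxp Pxp

/-- The operator `1 ⊗ D`, acting on the right argument of a bilinear product on `ℂ[x,p]`. -/
def onRight : Module.End ℂ Pxp →ₐ[ℂ] Module.End ℂ (Pxp ⊗[ℂ] Pxp) :=
  Module.End.lTensorAlgHom ℂ Pxp Pxp

lemma onLeft_tmul (D : Module.End ℂ Pxp) (A B : Pxp) : onLeft D (A ⊗ₜ B) = D A ⊗ₜ B := rfl

lemma onRight_tmul (D : Module.End ℂ Pxp) (A B : Pxp) : onRight D (A ⊗ₜ B) = A ⊗ₜ D B := rfl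

lemma commute_onLeft_onRight (D D' : Module.End ℂ Pxp) : Commute (onLeft D) (onRight D') :=
  TensorProduct.ext' fun _ _ ↦ rfl

/-- The Poisson bidifferential operator `∂ₓ ⊗ ∂ₚ - ∂ₚ ⊗ ∂ₓ`, whose composite with multiplication is
the Poisson bracket. The sign sits on `∂ₓ` so that the pairs `(x, ∂ₚ)` and `(p, -∂ₓ)` play symmetric
roles. -/
def poissonOp : Module.End ℂ (Pxp ⊗[ℂ] Pxp) := onLeft Dx * onRight Dp + onLeft Dp * onRight (-Dx)

lemma poissonOp_pow_tmul (k : ℕ) (A B : Pxp) :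
    (poissonOp ^ k) (A ⊗ₜ B) = ∑ j ∈ range (k + 1), ((-1 : ℂ) ^ j * (k.choose j : ℂ)) •
      ((Dx ^ (k - j) * Dp ^ j) A ⊗ₜ[ℂ] (Dx ^ j * Dp ^ (k - j)) B) := by
  have hcomm : Commute (onLeft Dp * onRight (-Dx)) (onLeft Dx * onRight Dp) :=
    ((commute_Dx_Dp.symm.map onLeft).mul_right (commute_onLeft_onRight _ _)).mul_left
      ((commute_onLeft_onRight _ _).symm.mul_right (commute_Dx_Dp.neg_left.map onRight))
  rw [poissonOp, add_comm, hcomm.add_pow, LinearMap.sum_apply]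
  refine sum_congr rfl fun j _ ↦ ?_
  have hterm : (onLeft Dp * onRight (-Dx)) ^ j * (onLeft Dx * onRight Dp) ^ (k - j) =
      onLeft (Dp ^ j * Dx ^ (k - j)) * onRight ((-Dx) ^ j * Dp ^ (k - j)) := by
    rw [(commute_onLeft_onRight _ _).mul_pow, (commute_onLeft_onRight _ _).mul_pow,
      ← map_pow, ← map_pow, ← map_pow, ← map_pow, map_mul, map_mul, mul_assoc, mul_assoc,
      (commute_onLeft_onRight (Dx ^ (k - j)) ((-Dx) ^ j)).symm.left_comm]
  have hsign : (-Dx) ^ j = (-1 : ℂ) ^ j • Dx ^ j := by rw [← neg_one_smul ℂ Dx, smul_pow]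
  rw [hterm, ← nsmul_eq_mul', LinearMap.smul_apply, Module.End.mul_apply, onRight_tmul,
    onLeft_tmul, (commute_Dx_Dp.pow_pow (k - j) j).eq, hsign, smul_mul_assoc,
    LinearMap.smul_apply, TensorProduct.tmul_smul, ← Nat.cast_smul_eq_nsmul ℂ, smul_smul,
    mul_comm]

lemma poissonOp_pow_tmul_eq_zero {k : ℕ} {A : Pxp} (hA : A.totalDegree < k) (B : Pxp) :
    (poissonOp ^ k) (A ⊗ₜ B) = 0 := by
  rw [poissonOp_pow_tmul]
  refine sum_eq_zero fun j hj ↦ ?_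
  have hj' : j < k + 1 := mem_range.mp hj
  rw [Dx_pow_mul_Dp_pow_eq_zero (by omega), TensorProduct.zero_tmul, smul_zero]

lemma isLocallyNilpotent_poissonOp : IsLocallyNilpotent poissonOp := by
  intro t
  induction t using TensorProduct.induction_on with
  | zero => exact ⟨0, map_zero _⟩
  | tmul A B =>
    exact ⟨A.totalDegree + 1, poissonOp_pow_tmul_eq_zero A.totalDegree.lt_succ_self B⟩
  | add s t hs ht =>
    obtain ⟨m, hm⟩ := hs
    obtain ⟨n, hn⟩ := ht
    exact ⟨m + n, by rw [map_add, Module.End.pow_map_zero_of_le (Nat.le_add_right m n) hm,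
      Module.End.pow_map_zero_of_le (Nat.le_add_left n m) hn, add_zero]⟩

/-- The Moyal product in exponential form, `A ⊗ B ↦ μ (exp (c (∂ₓ ⊗ ∂ₚ - ∂ₚ ⊗ ∂ₓ)) (A ⊗ B))` with
`μ` the multiplication; the parameter `c` stands for `iℏ/2`. -/
def moyalMap (c : ℂ) : Pxp ⊗[ℂ] Pxp →ₗ[ℂ] Pxp :=
  LinearMap.mul' ℂ Pxp ∘ₗ isLocallyNilpotent_poissonOp.eval (.rescale c (.exp ℂ))

lemma moyal_eq_moyalMap (ℏ : ℝ) (A B : Pxp) :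
    moyal ℏ A B = moyalMap (Complex.I * ℏ / 2) (A ⊗ₜ B) := by
  rw [moyalMap, LinearMap.comp_apply, isLocallyNilpotent_poissonOp.eval_apply _
    (poissonOp_pow_tmul_eq_zero A.totalDegree.lt_succ_self B), map_sum, moyal]
  refine sum_congr rfl fun k _ ↦ ?_
  simp [poissonOp_pow_tmul, PowerSeries.coeff_rescale, PowerSeries.coeff_exp, mul_comm]

lemma moyalMap_one_tmul (c : ℂ) (B : Pxp) : moyalMap c (1 ⊗ₜ B) = B := by
  have hzero : (poissonOp ^ 1) (1 ⊗ₜ B) = 0 := poissonOp_pow_tmul_eq_zero (by simp) B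
  rw [moyalMap, LinearMap.comp_apply, isLocallyNilpotent_poissonOp.eval_apply _ hzero]
  simp

/-- The Bopp shift `a + c D`. For `D` the Hamiltonian vector field of a linear polynomial `a`, it is
left Moyal multiplication by `a`, with `c` standing for `iℏ/2`. -/
def boppShift (c : ℂ) (a : Pxp) (D : Derivation ℂ Pxp Pxp) : Module.End ℂ Pxp :=
  LinearMap.mulLeft ℂ a + c • D.toLinearMap

lemma boppShift_apply (c : ℂ) (a : Pxp) (D : Derivation ℂ Pxp Pxp) (A : Pxp) :
    boppShift c a D A = a * A + c • D A := rfl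

lemma boppShift_comp_mul' (c : ℂ) (a : Pxp) (D : Derivation ℂ Pxp Pxp) :
    boppShift c a D ∘ₗ LinearMap.mul' ℂ Pxp =
      LinearMap.mul' ℂ Pxp ∘ₗ (onLeft (boppShift c a D) + c • onRight D.toLinearMap) := by
  refine TensorProduct.ext' fun A B ↦ ?_
  have hD : D (A * B) = D A * B + A * D B := by
    rw [D.leibniz, smul_eq_mul, smul_eq_mul, mul_comm B, add_comm]
  simp only [LinearMap.comp_apply, LinearMap.add_apply, LinearMap.smul_apply, boppShift_apply,
    onLeft_tmul, onRight_tmul, LinearMap.mul'_apply, map_add, map_smul, Derivation.coeFn_coe, hD,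
    add_mul, smul_add, smul_mul_assoc, mul_assoc, add_assoc]

lemma mul_boppShift_of_mul_mulLeft_eq {K L : Module.End ℂ Pxp} {a : Pxp}
    {D : Derivation ℂ Pxp Pxp} (hKD : Commute K D.toLinearMap)
    (hKa : K * LinearMap.mulLeft ℂ a = LinearMap.mulLeft ℂ a * K + L) (c : ℂ) :
    K * boppShift c a D = boppShift c a D * K + L := by
  rw [boppShift, mul_add, add_mul, hKa, mul_smul_comm, smul_mul_assoc, hKD.eq, add_right_comm]

lemma commute_poissonOp_onLeft {D : Module.End ℂ Pxp} (hx : Commute Dx D) (hp : Commute Dp D) :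
    Commute poissonOp (onLeft D) :=
  ((hx.map onLeft).mul_left (commute_onLeft_onRight _ _).symm).add_left
    ((hp.map onLeft).mul_left (commute_onLeft_onRight _ _).symm)

lemma commute_poissonOp_onRight {D : Module.End ℂ Pxp} (hx : Commute Dx D) (hp : Commute Dp D) :
    Commute poissonOp (onRight D) :=
  ((commute_onLeft_onRight _ _).mul_left (hp.map onRight)).add_left
    ((commute_onLeft_onRight _ _).mul_left (hx.neg_left.map onRight))

lemma poissonOp_mul_onLeft_mulLeft_xv :
    poissonOp * onLeft (LinearMap.mulLeft ℂ xv) =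
      onLeft (LinearMap.mulLeft ℂ xv) * poissonOp + onRight Dp := by
  rw [poissonOp, add_mul, mul_assoc, mul_assoc, ← (commute_onLeft_onRight _ _).eq,
    ← (commute_onLeft_onRight _ _).eq, ← mul_assoc, ← mul_assoc, ← map_mul, ← map_mul,
    Dx_mul_mulLeft_xv, commute_Dp_mulLeft_xv.eq, map_add, map_mul, map_mul, map_one, add_mul,
    one_mul, mul_assoc, mul_assoc, mul_add, add_right_comm]

lemma poissonOp_mul_onLeft_mulLeft_pv :
    poissonOp * onLeft (LinearMap.mulLeft ℂ pv) =
      onLeft (LinearMap.mulLeft ℂ pv) * poissonOp + onRight (-Dx) := by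
  rw [poissonOp, add_mul, mul_assoc, mul_assoc, ← (commute_onLeft_onRight _ _).eq,
    ← (commute_onLeft_onRight _ _).eq, ← mul_assoc, ← mul_assoc, ← map_mul, ← map_mul,
    Dp_mul_mulLeft_pv, commute_Dx_mulLeft_pv.eq, map_add, map_mul, map_mul, map_one, add_mul,
    one_mul, mul_assoc, mul_assoc, mul_add, add_assoc]

lemma moyalMap_comp_onLeft_boppShift {a : Pxp} {D : Derivation ℂ Pxp Pxp}
    (hx : Commute Dx D.toLinearMap) (hp : Commute Dp D.toLinearMap)
    (ha : poissonOp * onLeft (LinearMap.mulLeft ℂ a) =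
      onLeft (LinearMap.mulLeft ℂ a) * poissonOp + onRight D.toLinearMap) (c : ℂ) :
    moyalMap c ∘ₗ onLeft (boppShift c a D) = boppShift c a D ∘ₗ moyalMap c := by
  have hbopp : poissonOp * onLeft (boppShift c a D) =
      onLeft (boppShift c a D) * poissonOp + onRight D.toLinearMap := by
    rw [boppShift, map_add, map_smul, mul_add, add_mul, ha, mul_smul_comm, smul_mul_assoc,
      (commute_poissonOp_onLeft hx hp).eq, add_right_comm]
  rw [moyalMap, LinearMap.comp_assoc, ← Module.End.mul_eq_comp,
    isLocallyNilpotent_poissonOp.eval_exp_mul hbopp (commute_poissonOp_onRight hx hp),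
    Module.End.mul_eq_comp, ← LinearMap.comp_assoc, ← LinearMap.comp_assoc, boppShift_comp_mul']

lemma moyalMap_comp_onLeft_boppShift_xv (c : ℂ) :
    moyalMap c ∘ₗ onLeft (boppShift c xv (pderiv 1)) =
      boppShift c xv (pderiv 1) ∘ₗ moyalMap c :=
  moyalMap_comp_onLeft_boppShift commute_Dx_Dp (.refl Dp) poissonOp_mul_onLeft_mulLeft_xv c

lemma moyalMap_comp_onLeft_boppShift_pv (c : ℂ) :
    moyalMap c ∘ₗ onLeft (boppShift c pv (-pderiv 0)) =
      boppShift c pv (-pderiv 0) ∘ₗ moyalMap c := by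
  have hD : (-pderiv 0 : Derivation ℂ Pxp Pxp).toLinearMap = -Dx := rfl
  refine moyalMap_comp_onLeft_boppShift ?_ ?_ ?_ c <;> rw [hD]
  exacts [(Commute.refl Dx).neg_right, commute_Dx_Dp.symm.neg_right,
    poissonOp_mul_onLeft_mulLeft_pv]

end Moyal

section Quantization

lemma submodule_eq_top_of_boppShift_mem {N : Submodule ℂ Pxp} {c : ℂ} (hone : 1 ∈ N)
    (hx : ∀ A ∈ N, boppShift c xv (pderiv 1) A ∈ N)
    (hp : ∀ A ∈ N, boppShift c pv (-pderiv 0) A ∈ N) : N = ⊤ := by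
  have hmem (m n : ℕ) : pv ^ m * xv ^ n ∈ N := by
    induction m generalizing n with
    | zero =>
      induction n with
      | zero => simpa using hone
      | succ n ih =>
        have hshift : boppShift c xv (pderiv 1) (pv ^ 0 * xv ^ n) = pv ^ 0 * xv ^ (n + 1) := by
          rw [boppShift_apply, ← Dp_apply, Dp_pv_pow_mul_xv_pow]
          simp [pow_succ']
        exact hshift ▸ hx _ ih
    | succ m ih =>
      have hshift : boppShift c pv (-pderiv 0) (pv ^ m * xv ^ n) + (c * n) • (pv ^ m * xv ^ (n - 1))
          = pv ^ (m + 1) * xv ^ n := by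
        rw [boppShift_apply, Derivation.neg_apply, ← Dx_apply, Dx_pv_pow_mul_xv_pow, smul_neg,
          smul_smul, neg_add_cancel_right, pow_succ', mul_assoc]
      exact hshift ▸ N.add_mem (hp _ (ih n)) (N.smul_mem _ (ih (n - 1)))
  refine Submodule.eq_top_iff'.mpr fun A ↦ ?_
  rw [A.as_sum]
  refine N.sum_mem fun u _ ↦ ?_
  rw [monomial_eq_smul_pv_pow_mul_xv_pow]
  exact N.smul_mem _ (hmem _ _)

lemma linearMap_ext_boppShift {M : Type*} [AddCommMonoid M] [Module ℂ M] {f g : Pxp →ₗ[ℂ] M}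
    {Q R : Module.End ℂ M} {c : ℂ} (hone : f 1 = g 1)
    (hfx : f ∘ₗ boppShift c xv (pderiv 1) = Q ∘ₗ f) (hgx : g ∘ₗ boppShift c xv (pderiv 1) = Q ∘ₗ g)
    (hfp : f ∘ₗ boppShift c pv (-pderiv 0) = R ∘ₗ f)
    (hgp : g ∘ₗ boppShift c pv (-pderiv 0) = R ∘ₗ g) : f = g := by
  refine LinearMap.eqLocus_eq_top.mp (submodule_eq_top_of_boppShift_mem (c := c) hone ?_ ?_)
  · intro A (hA : f A = g A)
    exact (LinearMap.congr_fun hfx A).trans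
      ((congrArg Q hA).trans (LinearMap.congr_fun hgx A).symm)
  · intro A (hA : f A = g A)
    exact (LinearMap.congr_fun hfp A).trans
      ((congrArg R hA).trans (LinearMap.congr_fun hgp A).symm)

variable {𝒜 : Type*} [Ring 𝒜] [Algebra ℂ 𝒜]

/-- Quantization by normal ordering: `pᵐ xⁿ ↦ Pᵐ Xⁿ`, with all factors `P` to the left. -/
def normalOrdering (P X : 𝒜) : Pxp →ₗ[ℂ] 𝒜 :=
  (basisMonomials (Fin 2) ℂ).constr ℂ fun u ↦ P ^ u 1 * X ^ u 0

lemma normalOrdering_pv_pow_mul_xv_pow (P X : 𝒜) (m n : ℕ) :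
    normalOrdering P X (pv ^ m * xv ^ n) = P ^ m * X ^ n := by
  have hbasis : pv ^ m * xv ^ n =
      basisMonomials (Fin 2) ℂ (Finsupp.single 1 m + Finsupp.single 0 n) := by
    simp [monomial_eq_smul_pv_pow_mul_xv_pow]
  rw [hbasis, normalOrdering, Module.Basis.constr_basis]
  simp

lemma normalOrdering_comp_mulLeft_pv (P X : 𝒜) :
    normalOrdering P X ∘ₗ LinearMap.mulLeft ℂ pv =
      LinearMap.mulLeft ℂ P ∘ₗ normalOrdering P X := by
  refine linearMap_ext_pv_pow_mul_xv_pow fun m n ↦ ?_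
  simp only [LinearMap.comp_apply, LinearMap.mulLeft_apply, ← mul_assoc, ← pow_succ',
    normalOrdering_pv_pow_mul_xv_pow]

lemma mul_pow_of_mul_eq_add_smul_one {P X : 𝒜} {κ : ℂ} (hXP : X * P = P * X + κ • 1) (m : ℕ) :
    X * P ^ m = P ^ m * X + (κ * m) • P ^ (m - 1) := by
  cases m with
  | zero => simp
  | succ m =>
    have hPX : P * X = X * P + -(κ • 1) := by rw [hXP, add_neg_cancel_right]
    have hcomm : Commute P (-(κ • 1)) := ((Commute.one_right P).smul_right κ).neg_right
    rw [pow_succ_mul_of_mul_eq hPX hcomm, neg_mul, smul_mul_assoc, one_mul, smul_neg,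
      ← Nat.cast_smul_eq_nsmul ℂ, smul_smul, mul_comm κ, Nat.add_sub_cancel, neg_add_cancel_right]

lemma normalOrdering_comp_boppShift_xv {P X : 𝒜} {κ : ℂ} (hXP : X * P = P * X + κ • 1) :
    normalOrdering P X ∘ₗ boppShift κ xv (pderiv 1) =
      LinearMap.mulLeft ℂ X ∘ₗ normalOrdering P X := by
  refine linearMap_ext_pv_pow_mul_xv_pow fun m n ↦ ?_
  simp only [LinearMap.comp_apply, LinearMap.mulLeft_apply, boppShift_apply, ← Dp_apply,
    Dp_pv_pow_mul_xv_pow, smul_smul, mul_left_comm xv, ← pow_succ', map_add, map_smul,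
    normalOrdering_pv_pow_mul_xv_pow]
  rw [← mul_assoc, mul_pow_of_mul_eq_add_smul_one hXP, add_mul, mul_assoc, ← pow_succ',
    smul_mul_assoc]

/-- Weyl (symmetric) quantization, written as normal ordering after `exp (c ∂ₓ ∂ₚ)`; the parameter
`c` stands for `iℏ/2`. -/
def weylQuantization (c : ℂ) (P X : 𝒜) : Pxp →ₗ[ℂ] 𝒜 :=
  normalOrdering P X ∘ₗ isLocallyNilpotent_Dx_mul_Dp.eval (.rescale c (.exp ℂ))

lemma weylQuantization_one (c : ℂ) (P X : 𝒜) : weylQuantization c P X 1 = 1 := by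
  have hzero : ((Dx * Dp) ^ 1) (1 : Pxp) = 0 := Dx_mul_Dp_pow_eq_zero (by simp)
  rw [weylQuantization, LinearMap.comp_apply, isLocallyNilpotent_Dx_mul_Dp.eval_apply _ hzero]
  simpa using normalOrdering_pv_pow_mul_xv_pow P X 0 0

lemma weylQuantization_eval_Dx_mul_Dp_apply (c : ℂ) (P X : 𝒜) (φ : ℂ⟦X⟧) (m n : ℕ) :
    weylQuantization c P X (isLocallyNilpotent_Dx_mul_Dp.eval φ (pv ^ m * xv ^ n)) =
      ∑ s ∈ range (min m n + 1), (PowerSeries.coeff s (PowerSeries.rescale c (.exp ℂ) * φ) *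
        (m.descFactorial s * n.descFactorial s)) • (P ^ (m - s) * X ^ (n - s)) := by
  rw [weylQuantization, LinearMap.comp_apply, ← Module.End.mul_apply,
    ← isLocallyNilpotent_Dx_mul_Dp.eval_mul, eval_Dx_mul_Dp_apply]
  simp only [map_sum, map_smul, normalOrdering_pv_pow_mul_xv_pow]

lemma weylQuantization_comp_boppShift_xv {P X : 𝒜} {c : ℂ}
    (hXP : X * P = P * X + (2 * c) • 1) :
    weylQuantization c P X ∘ₗ boppShift c xv (pderiv 1) =
      LinearMap.mulLeft ℂ X ∘ₗ weylQuantization c P X := by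
  have hDp : Commute (Dx * Dp) Dp := commute_Dx_Dp.mul_left (.refl Dp)
  have hcomm : Dx * Dp * boppShift c xv (pderiv 1) =
      boppShift c xv (pderiv 1) * (Dx * Dp) + Dp :=
    mul_boppShift_of_mul_mulLeft_eq hDp Dx_mul_Dp_mul_mulLeft_xv c
  have hshift : boppShift c xv (pderiv 1) + c • Dp = boppShift (2 * c) xv (pderiv 1) := by
    rw [boppShift, boppShift, add_assoc, two_mul, add_smul]
    rfl
  rw [weylQuantization, LinearMap.comp_assoc, ← Module.End.mul_eq_comp,
    isLocallyNilpotent_Dx_mul_Dp.eval_exp_mul hcomm hDp, hshift, Module.End.mul_eq_comp,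
    ← LinearMap.comp_assoc, normalOrdering_comp_boppShift_xv hXP, LinearMap.comp_assoc]

lemma weylQuantization_comp_boppShift_pv (c : ℂ) (P X : 𝒜) :
    weylQuantization c P X ∘ₗ boppShift c pv (-pderiv 0) =
      LinearMap.mulLeft ℂ P ∘ₗ weylQuantization c P X := by
  have hDx : Commute (Dx * Dp) Dx := (Commute.refl Dx).mul_left commute_Dx_Dp.symm
  have hcomm : Dx * Dp * boppShift c pv (-pderiv 0) =
      boppShift c pv (-pderiv 0) * (Dx * Dp) + Dx :=
    mul_boppShift_of_mul_mulLeft_eq hDx.neg_right Dx_mul_Dp_mul_mulLeft_pv c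
  have hshift : boppShift c pv (-pderiv 0) + c • Dx = LinearMap.mulLeft ℂ pv := by
    refine LinearMap.ext fun A ↦ ?_
    simp [boppShift_apply, Dx_apply]
  rw [weylQuantization, LinearMap.comp_assoc, ← Module.End.mul_eq_comp,
    isLocallyNilpotent_Dx_mul_Dp.eval_exp_mul hcomm hDx, hshift, Module.End.mul_eq_comp,
    ← LinearMap.comp_assoc, normalOrdering_comp_mulLeft_pv, LinearMap.comp_assoc]

theorem weylQuantization_moyalMap {P X : 𝒜} {c : ℂ} (hXP : X * P = P * X + (2 * c) • 1)
    (A B : Pxp) : weylQuantization c P X (moyalMap c (A ⊗ₜ B)) =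
      weylQuantization c P X A * weylQuantization c P X B := by
  set W := weylQuantization c P X
  suffices h : W ∘ₗ moyalMap c ∘ₗ (TensorProduct.mk ℂ Pxp Pxp).flip B =
      LinearMap.mulRight ℂ (W B) ∘ₗ W from LinearMap.congr_fun h A
  have hWx (C : Pxp) : W (boppShift c xv (pderiv 1) C) = X * W C :=
    LinearMap.congr_fun (weylQuantization_comp_boppShift_xv hXP) C
  have hWp (C : Pxp) : W (boppShift c pv (-pderiv 0) C) = P * W C :=
    LinearMap.congr_fun (weylQuantization_comp_boppShift_pv c P X) C
  have hMx (C : Pxp) : moyalMap c (boppShift c xv (pderiv 1) C ⊗ₜ B) =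
      boppShift c xv (pderiv 1) (moyalMap c (C ⊗ₜ B)) :=
    LinearMap.congr_fun (moyalMap_comp_onLeft_boppShift_xv c) (C ⊗ₜ B)
  have hMp (C : Pxp) : moyalMap c (boppShift c pv (-pderiv 0) C ⊗ₜ B) =
      boppShift c pv (-pderiv 0) (moyalMap c (C ⊗ₜ B)) :=
    LinearMap.congr_fun (moyalMap_comp_onLeft_boppShift_pv c) (C ⊗ₜ B)
  refine linearMap_ext_boppShift (c := c) (Q := LinearMap.mulLeft ℂ X) (R := LinearMap.mulLeft ℂ P)
    ?_ (LinearMap.ext fun C ↦ ?_) (LinearMap.ext fun C ↦ ?_) (LinearMap.ext fun C ↦ ?_)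
    (LinearMap.ext fun C ↦ ?_)
  · simp [W, moyalMap_one_tmul, weylQuantization_one]
  · simp [hMx, hWx]
  · simp [hWx, mul_assoc]
  · simp [hMp, hWp]
  · simp [hWp, mul_assoc]

end Quantization

section GeneralizedStarProduct

lemma gα_mul_pow_eq_coeff (α : ℕ → ℂ) (ℏ : ℂ) {m n s : ℕ} (hm : s ≤ m) (hn : s ≤ n) :
    gα α m n s * ℏ ^ s =
      PowerSeries.coeff s (PowerSeries.rescale (Complex.I * ℏ / 2) (.exp ℂ) *
        .mk fun k ↦ α k * (-ℏ) ^ k) * (m.descFactorial s * n.descFactorial s) := by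
  have hdesc {l : ℕ} (hl : s ≤ l) : (l.descFactorial s : ℂ) = l.factorial / (l - s).factorial := by
    rw [eq_div_iff (mod_cast (l - s).factorial_ne_zero), mul_comm]
    exact_mod_cast Nat.factorial_mul_descFactorial hl
  have hscalar {k : ℕ} (hk : k ≤ s) : (Complex.I / 2) ^ s * (2 * Complex.I) ^ k * ℏ ^ s =
      (Complex.I * ℏ / 2) ^ (s - k) * (-ℏ) ^ k := by
    obtain ⟨j, rfl⟩ := Nat.exists_eq_add_of_le hk
    have hI : (Complex.I / 2) ^ k * (2 * Complex.I) ^ k = (-1) ^ k := by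
      rw [← mul_pow]
      exact congrArg (· ^ k) (by linear_combination Complex.I_mul_I)
    rw [Nat.add_sub_cancel_left, neg_pow ℏ]
    linear_combination ℏ ^ (k + j) * (Complex.I / 2) ^ j * hI
  rw [gα, mul_comm (PowerSeries.rescale _ _), PowerSeries.coeff_mul,
    Finset.Nat.sum_antidiagonal_eq_sum_range_succ_mk, hdesc hm, hdesc hn, mul_sum, sum_mul,
    sum_mul]
  refine sum_congr rfl fun k hk ↦ ?_
  simp only [PowerSeries.coeff_mk, PowerSeries.coeff_rescale, PowerSeries.coeff_exp, map_div₀,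
    map_one, map_natCast]
  linear_combination
    α k / (s - k).factorial * (m.factorial * n.factorial) /
      ((m - s).factorial * (n - s).factorial) * hscalar (Nat.lt_succ_iff.mp (mem_range.mp hk))

lemma aop_mul_adop : (aop * adop : Module.End ℂ (ℕ →₀ ℂ)) = adop * aop + 1 := by
  have hsqrt (n : ℕ) : ((√(n + 1) : ℝ) : ℂ) * ((√(n + 1) : ℝ) : ℂ) = n + 1 := by
    exact_mod_cast Real.mul_self_sqrt n.cast_add_one_pos.le
  refine Finsupp.lhom_ext' fun n ↦ LinearMap.ext_ring ?_
  cases n with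
  | zero => simp [aop, adop]
  | succ n =>
    have hsqrt' := hsqrt (n + 1)
    push_cast at hsqrt'
    simp [aop, adop, hsqrt, hsqrt', -Finsupp.single_mul, ← Finsupp.single_add]

lemma adop_mul_smul_aop (c : ℂ) :
    (adop * (-c • aop) : Module.End ℂ (ℕ →₀ ℂ)) = -c • aop * adop + c • 1 := by
  rw [mul_smul_comm, smul_mul_assoc, aop_mul_adop, smul_add, add_assoc, ← add_smul,
    neg_add_cancel, zero_smul, add_zero]

theorem stmt4_general {𝒜 : Type*} [Ring 𝒜] [Algebra ℂ 𝒜] (P X : 𝒜) (ℏ : ℝ)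
    (hXP : X * P = P * X + (Complex.I * ℏ) • 1) (α : ℕ → ℂ) (T : Pxp ≃ₗ[ℂ] Pxp)
    (hT : ∀ A : Pxp, T A = ∑ k ∈ range (A.totalDegree + 1),
      (α k * (-(ℏ : ℂ)) ^ k) • ((Dx * Dp) ^ k) A)
    (Φ : Pxp →ₗ[ℂ] 𝒜)
    (hΦ : ∀ m n : ℕ, Φ (pv ^ m * xv ^ n) =
      ∑ s ∈ range (min m n + 1), (gα α m n s * (ℏ : ℂ) ^ s) • (P ^ (m - s) * X ^ (n - s)))
    (A B : Pxp) : Φ (T.symm (moyal ℏ (T A) (T B))) = Φ A * Φ B := by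
  set c := Complex.I * ℏ / 2 with hc
  have hTeval : T.toLinearMap =
      isLocallyNilpotent_Dx_mul_Dp.eval (.mk fun k ↦ α k * (-(ℏ : ℂ)) ^ k) := by
    refine LinearMap.ext fun C ↦ ?_
    rw [isLocallyNilpotent_Dx_mul_Dp.eval_apply _
      (Dx_mul_Dp_pow_eq_zero C.totalDegree.lt_succ_self)]
    simpa using hT C
  have hΦT : Φ = weylQuantization c P X ∘ₗ T.toLinearMap := by
    refine linearMap_ext_pv_pow_mul_xv_pow fun m n ↦ ?_
    rw [hΦ, hTeval, LinearMap.comp_apply, weylQuantization_eval_Dx_mul_Dp_apply]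
    refine sum_congr rfl fun s hs ↦ ?_
    have hs' : s < min m n + 1 := mem_range.mp hs
    rw [gα_mul_pow_eq_coeff α ℏ (by omega : s ≤ m) (by omega : s ≤ n)]
  have hXP' : X * P = P * X + (2 * c) • 1 := by rw [hXP, hc, mul_div_cancel₀ _ two_ne_zero]
  simp only [hΦT, LinearMap.comp_apply, LinearEquiv.coe_coe, LinearEquiv.apply_symm_apply,
    moyal_eq_moyalMap, weylQuantization_moyalMap hXP', ← hc]

end GeneralizedStarProduct

/-- with `α̂` the automorphism attached to `α`, the generalized star product
`A ⋆_α B = α̂⁻¹((α̂ A) ⋆ (α̂ B))`, and `Φ_α(p^m x^n) = Σ_s g_α(m,n,s) ℏ^s F^{(m−s,n−s)}`,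
one has `Φ_α(A ⋆_α B) = Φ_α(A) ∘ Φ_α(B)`. -/
theorem stmt4 (ℏ : ℝ) (hℏ : ℏ ≠ 0) (α : ℕ → ℂ) (hα : α 0 = 1)
    (T : Pxp ≃ₗ[ℂ] Pxp)
    (hT : ∀ A : Pxp, T A = ∑ k ∈ Finset.range (A.totalDegree + 1),
      (α k * (-(ℏ : ℂ)) ^ k) • (((Dx * Dp) ^ k) A))
    (Φ : Pxp →ₗ[ℂ] Module.End ℂ (ℕ →₀ ℂ))
    (hΦ : ∀ m n : ℕ, Φ (pv ^ m * xv ^ n) =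
      ∑ s ∈ Finset.range (min m n + 1), (gα α m n s * (ℏ : ℂ) ^ s) • F ℏ (m - s) (n - s)) :
    ∀ A B : Pxp, Φ (T.symm (moyal ℏ (T A) (T B))) = Φ A * Φ B := by
  exact stmt4_general _ adop ℏ (adop_mul_smul_aop (Complex.I * ℏ)) α T hT Φ hΦ

end
end

section
/- For all m, n ∈ ℕ, the symmetric (Rivier) ordering identity holds in End_ℂ(V): (1/2)·((−iħ·a)^m ∘ (a†)^n + (a†)^n ∘ (−iħ·a)^m) = F^{(m,n)} + Σ_{s=1}^{min(m,n)} ((iħ)^s · m!·n!/(2·s!·(m−s)!·(n−s)!)) · F^{(m−s,n−s)}. -/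
open Complex MvPolynomial Finset

noncomputable section

/-!
Writing left multiplication by `y` as `ad y` plus right multiplication by `y`, two commuting
operators, the binomial theorem gives `yⁿ z = ∑ₛ (n choose s) (ad y)ˢ(z) yⁿ⁻ˢ`. When `⁅y, x⁆`
commutes with `x` and `y`, `ad y` acts on powers of `x` as `⁅y, x⁆ · d/dx`, so `(ad y)ˢ(xᵐ)` is a
descending factorial times `⁅y, x⁆ˢ xᵐ⁻ˢ`. This puts `yⁿ xᵐ` in the order with `x` on the left;
averaging with `xᵐ yⁿ` halves every term except `s = 0`. For `x = -iℏa` and `y = a†`, the bracket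
`⁅y, x⁆` is the scalar `iℏ`.
-/

section Ring

attribute [local instance] LieRing.ofAssociativeRing

variable {A : Type*} [Ring A] {x y : A}

theorem lie_pow_of_commute_lie (hx : Commute ⁅y, x⁆ x) (m : ℕ) :
    ⁅y, x ^ m⁆ = m • (⁅y, x⁆ * x ^ (m - 1)) := by
  induction m with
  | zero => simp [Ring.lie_def]
  | succ m ih =>
    have leibniz : ⁅y, x ^ (m + 1)⁆ = ⁅y, x ^ m⁆ * x + x ^ m * ⁅y, x⁆ := by
      simp only [Ring.lie_def, pow_succ]
      noncomm_ring
    have absorb : m • (⁅y, x⁆ * x ^ (m - 1)) * x = m • (⁅y, x⁆ * x ^ m) := by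
      cases m <;> simp [pow_succ, mul_assoc]
    rw [leibniz, ih, absorb, ← (hx.pow_right m).eq, succ_nsmul, Nat.add_sub_cancel]

theorem ad_pow_apply_pow (hx : Commute ⁅y, x⁆ x) (hy : Commute ⁅y, x⁆ y) (m s : ℕ) :
    (LieAlgebra.ad ℤ A y ^ s) (x ^ m) = m.descFactorial s • (⁅y, x⁆ ^ s * x ^ (m - s)) := by
  induction s with
  | zero => simp
  | succ s ih =>
    have lie_mul_left (z : A) : ⁅y, ⁅y, x⁆ ^ s * z⁆ = ⁅y, x⁆ ^ s * ⁅y, z⁆ := by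
      rw [Ring.lie_def y z, mul_sub, ← mul_assoc, (hy.pow_left s).eq, Ring.lie_def, mul_assoc,
        mul_assoc]
    rw [pow_succ', Module.End.mul_apply, ih, map_nsmul, LieAlgebra.ad_apply, lie_mul_left,
      lie_pow_of_commute_lie hx, mul_smul_comm, smul_smul, Nat.descFactorial_succ, pow_succ,
      mul_assoc, Nat.sub_sub, mul_comm (m - s)]

theorem pow_mul_eq_sum_ad_pow_mul_pow (y z : A) (n : ℕ) :
    y ^ n * z =
      ∑ s ∈ range (n + 1), n.choose s • ((LieAlgebra.ad ℤ A y ^ s) z * y ^ (n - s)) := by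
  have ad_eq : LieAlgebra.ad ℤ A y = LinearMap.mulLeft ℤ y - LinearMap.mulRight ℤ y :=
    congrFun (LieAlgebra.ad_eq_lmul_left_sub_lmul_right A) y
  have commute_ad_mulRight : Commute (LieAlgebra.ad ℤ A y) (LinearMap.mulRight ℤ y) := by
    rw [ad_eq]
    exact (LinearMap.commute_mulLeft_right y y).sub_left (Commute.refl _)
  calc y ^ n * z = (LinearMap.mulLeft ℤ y ^ n) z := by simp [LinearMap.pow_mulLeft]
    _ = _ := by
      rw [sub_eq_iff_eq_add.1 ad_eq.symm, commute_ad_mulRight.add_pow, LinearMap.sum_apply]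
      refine sum_congr rfl fun s _ => ?_
      rw [(commute_ad_mulRight.pow_pow s (n - s)).eq, ← nsmul_eq_mul', LinearMap.smul_apply,
        Module.End.mul_apply, LinearMap.pow_mulRight, LinearMap.mulRight_apply]

theorem pow_mul_pow_eq_sum_of_commute_lie (hx : Commute ⁅y, x⁆ x) (hy : Commute ⁅y, x⁆ y)
    (m n : ℕ) :
    y ^ n * x ^ m = ∑ s ∈ range (min m n + 1),
      (n.choose s * m.descFactorial s) • (⁅y, x⁆ ^ s * x ^ (m - s) * y ^ (n - s)) := by
  have vanish (s : ℕ) (hs : s ∈ range (n + 1)) (hs' : s ∉ range (min m n + 1)) :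
      (n.choose s * m.descFactorial s) • (⁅y, x⁆ ^ s * x ^ (m - s) * y ^ (n - s)) = 0 := by
    have hms : m < s := by
      simp only [mem_range] at hs hs'
      omega
    simp [Nat.descFactorial_eq_zero_iff_lt.2 hms]
  rw [sum_subset (range_subset_range.2 (by omega)) vanish, pow_mul_eq_sum_ad_pow_mul_pow]
  refine sum_congr rfl fun s _ => ?_
  rw [ad_pow_apply_pow hx hy, smul_mul_assoc, smul_smul]

theorem mul_neg_smul_sub_neg_smul_mul {R : Type*} [CommRing R] [Algebra R A]
    (h : x * y - y * x = 1) (c : R) : y * (-c • x) - (-c • x) * y = c • 1 := by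
  rw [mul_smul_comm, smul_mul_assoc, ← smul_sub, neg_smul, ← smul_neg, neg_sub, h]

end Ring

section Algebra

variable {K A : Type*} [Field K] [CharZero K] [Ring A] [Algebra K A] {x y : A} {d : K}

theorem cast_choose_mul_descFactorial {m n s : ℕ} (hm : s ≤ m) (hn : s ≤ n) :
    (n.choose s * m.descFactorial s : K) =
      m.factorial * n.factorial / (s.factorial * (m - s).factorial * (n - s).factorial) := by
  have hms : ((m - s).factorial : K) ≠ 0 := Nat.cast_ne_zero.2 (Nat.factorial_ne_zero _)
  rw [Nat.cast_choose K hn, ← Nat.factorial_mul_descFactorial hm, Nat.cast_mul]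
  field_simp

theorem pow_mul_pow_eq_sum_of_commutator_eq_smul_one (h : y * x - x * y = d • 1) (m n : ℕ) :
    y ^ n * x ^ m = ∑ s ∈ range (min m n + 1),
      (d ^ s * (m.factorial * n.factorial : K) /
        (s.factorial * (m - s).factorial * (n - s).factorial)) • (x ^ (m - s) * y ^ (n - s)) := by
  have lie_eq : ⁅y, x⁆ = d • 1 := h
  have commute_lie (z : A) : Commute ⁅y, x⁆ z := lie_eq ▸ (Commute.one_left z).smul_left d
  rw [pow_mul_pow_eq_sum_of_commute_lie (commute_lie x) (commute_lie y)]
  refine sum_congr rfl fun s hs => ?_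
  obtain ⟨hm, hn⟩ := le_min_iff.1 (mem_range_succ_iff.1 hs)
  rw [mul_div_assoc, ← cast_choose_mul_descFactorial hm hn, lie_eq, smul_pow, one_pow, mul_assoc,
    smul_one_mul, ← Nat.cast_smul_eq_nsmul K, smul_smul, Nat.cast_mul, mul_comm]

theorem stmt12_general (h : y * x - x * y = d • 1) (m n : ℕ) :
    (1 / 2 : K) • (x ^ m * y ^ n + y ^ n * x ^ m) =
      x ^ m * y ^ n +
        ∑ s ∈ Icc 1 (min m n),
          (d ^ s * (m.factorial * n.factorial : K) /
            (2 * s.factorial * (m - s).factorial * (n - s).factorial)) •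
            (x ^ (m - s) * y ^ (n - s)) := by
  have half_coeff (s : ℕ) :
      d ^ s * (m.factorial * n.factorial : K) /
          (2 * s.factorial * (m - s).factorial * (n - s).factorial) =
        (1 / 2) * (d ^ s * (m.factorial * n.factorial : K) /
          (s.factorial * (m - s).factorial * (n - s).factorial)) := by
    field_simp
  have leading_coeff :
      d ^ 0 * (m.factorial * n.factorial : K) /
        (Nat.factorial 0 * (m - 0).factorial * (n - 0).factorial) = 1 := by
    simp [Nat.factorial_ne_zero]
  rw [pow_mul_pow_eq_sum_of_commutator_eq_smul_one h, sum_range_eq_add_Ico _ (Nat.succ_pos _),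
    leading_coeff]
  simp only [half_coeff, mul_smul, ← smul_sum, Nat.sub_zero, Nat.succ_eq_add_one,
    Ico_add_one_right_eq_Icc]
  module

end Algebra

theorem aop_e_zero : aop (e 0) = 0 := by
  simp [aop, e]

theorem aop_e_succ (n : ℕ) : aop (e (n + 1)) = ((Real.sqrt (n + 1) : ℝ) : ℂ) • e n := by
  simp [aop, e]

theorem adop_e (n : ℕ) : adop (e n) = ((Real.sqrt (n + 1) : ℝ) : ℂ) • e (n + 1) := by
  simp [adop, e]

theorem ofReal_sqrt_add_one_mul_self (n : ℕ) :
    ((Real.sqrt (n + 1) : ℝ) : ℂ) * ((Real.sqrt (n + 1) : ℝ) : ℂ) = n + 1 := by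
  rw [← ofReal_mul, Real.mul_self_sqrt (by positivity)]
  push_cast
  rfl

theorem aop_adop_e (n : ℕ) : aop (adop (e n)) = (n + 1 : ℂ) • e n := by
  rw [adop_e, map_smul, aop_e_succ, smul_smul, ofReal_sqrt_add_one_mul_self]

theorem adop_aop_e (n : ℕ) : adop (aop (e n)) = (n : ℂ) • e n := by
  cases n with
  | zero => simp [aop_e_zero]
  | succ n =>
    rw [aop_e_succ, map_smul, adop_e, smul_smul, ofReal_sqrt_add_one_mul_self, Nat.cast_succ]

/-- the symmetric (Rivier) ordering identity
`½((−iℏa)^m (a†)^n + (a†)^n (−iℏa)^m)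
  = F^{(m,n)} + Σ_{s=1}^{min(m,n)} ((iℏ)^s m!n!/(2 s!(m−s)!(n−s)!)) F^{(m−s,n−s)}`. -/
theorem stmt12 (ℏ : ℝ) (hℏ : ℏ ≠ 0) (m n : ℕ) :
    (1 / 2 : ℂ) •
        (((-(Complex.I * ℏ)) • (aop : Module.End ℂ (ℕ →₀ ℂ))) ^ m *
            (adop : Module.End ℂ (ℕ →₀ ℂ)) ^ n +
          (adop : Module.End ℂ (ℕ →₀ ℂ)) ^ n *
            ((-(Complex.I * ℏ)) • (aop : Module.End ℂ (ℕ →₀ ℂ))) ^ m) =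
      F ℏ m n +
        ∑ s ∈ Finset.Icc 1 (min m n),
          ((Complex.I * ℏ) ^ s * (m.factorial * n.factorial : ℂ) /
            (2 * s.factorial * (m - s).factorial * (n - s).factorial)) •
            F ℏ (m - s) (n - s) := by
  exact stmt12_general (A := Module.End ℂ (ℕ →₀ ℂ))
    (mul_neg_smul_sub_neg_smul_mul aop_mul_adop_sub_adop_mul_aop (Complex.I * ℏ)) m n

end
end
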